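/- (Continuous dependence for the Volterra integral equation) Let 0 < α ≤ 1, ψ increasing C¹ on I, 0 ≤ N < 1, r continuous nonnegative on a ≤ σ ≤ t with t ↦ r(t,t) nondecreasing and r(t,σ) ≤ r(t,t), and ε₁ > 0. Suppose |f(t,u,v)−f(t,ū,v̄)| ≤ N(|u−ū|+|v−v̄|), |k(t,σ,u)−k(t,σ,v)| ≤ r(t,σ)|u−v|, and for all t ∈ I, |f(t, y(t), (1/Γ(α))∫_a^t ψ'(σ)(ψ(t)−ψ(σ))^{α−1} k(t,σ,y(σ))dσ) − f̄(t, y(t), (1/Γ(α))∫_a^t ψ'(σ)(ψ(t)−ψ(σ))^{α−1} k̄(t,σ,y(σ))dσ)| ≤ ε₁. If x solves x(t) = f(t, x(t), (1/Γ(α))∫_a^t ψ'(σ)(ψ(t)−ψ(σ))^{α−1}k(t,σ,x(σ))dσ) and y solves the analogous equation with f̄, k̄, then |x(t) − y(t)| ≤ (ε₁/(1−N)) E_α( (N/(1−N)) r(t,t) (ψ(t)−ψ(a))^α ) for all t ∈ I. -/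

import Mathlib

open MeasureTheory Set

/-- One-parameter Mittag-Leffler function `E_α(z) = ∑ z^k / Γ(αk+1)`. -/
noncomputable def ML (α z : ℝ) : ℝ := ∑' k : ℕ, z ^ k / Real.Gamma (α * k + 1)

/-- The inner Volterra integral operator (scalar version). -/
noncomputable def volterraK (α : ℝ) (ψ : ℝ → ℝ) (a : ℝ)
    (k : ℝ → ℝ → ℝ → ℝ) (x : ℝ → ℝ) (t : ℝ) : ℝ :=
  (Real.Gamma α)⁻¹ * ∫ σ in a..t, deriv ψ σ * (ψ t - ψ σ) ^ (α - 1) * k t σ (x σ)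

open Filter Topology

/-!
The `ψ`-fractional integral `I^α` of order `α` is positive and linear, and the substitution
`s = ψ σ` reduces its action on the powers of `ψ - ψ a` to Euler's Beta integral. Consequently
`R I^α` maps each term of the series of `E_α(R (ψ t - ψ a)^α)` to the next one, so iterating
`u ≤ c + R I^α u` bounds `u` by `c` times a partial sum of that series plus a multiple of its next
term; the latter tends to `0`, which is the Gronwall inequality.

The equation with `f̄`, `k̄` enters only through the fact that `y` solves the equation with `f`, `k`
up to an error `ε₁`. Subtracting the two equations and absorbing the term `N |x - y|` into the left
hand side leaves `|x - y| ≤ ε₁ / (1 - N) + N / (1 - N) * r t t * I^α |x - y|`.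
-/

section MittagLeffler

/-- The `n`-th term of the Mittag-Leffler series `ML α z`. -/
noncomputable def mlTerm (α z : ℝ) (n : ℕ) : ℝ := z ^ n / Real.Gamma (α * n + 1)

lemma mlTerm_zero (α z : ℝ) : mlTerm α z 0 = 1 := by
  simp [mlTerm]

lemma rpow_mul_exp_neg_le_Gamma_add_one {s A : ℝ} (hs : 0 ≤ s) (hA : 0 ≤ A) :
    A ^ s * Real.exp (-A) ≤ Real.Gamma (s + 1) := by
  have hint := Real.GammaIntegral_convergent (s := s + 1) (by linarith)
  have hsub : Ioi A ⊆ Ioi 0 := Ioi_subset_Ioi hA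
  calc A ^ s * Real.exp (-A)
      = ∫ x in Ioi A, A ^ s * Real.exp (-x) := by
        rw [← integral_exp_neg_Ioi, ← integral_const_mul]
    _ ≤ ∫ x in Ioi A, Real.exp (-x) * x ^ (s + 1 - 1) := by
        refine setIntegral_mono_on ((integrableOn_exp_neg_Ioi A).const_mul _)
          (hint.mono_set hsub) measurableSet_Ioi fun x hx => ?_
        rw [add_sub_cancel_right, mul_comm]
        gcongr
        exact hx.le
    _ ≤ ∫ x in Ioi 0, Real.exp (-x) * x ^ (s + 1 - 1) := by
        refine setIntegral_mono_set hint ?_ hsub.eventuallyLE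
        exact ae_restrict_of_forall_mem measurableSet_Ioi fun x hx =>
          mul_nonneg (Real.exp_nonneg _) (Real.rpow_nonneg (le_of_lt hx) _)
    _ = Real.Gamma (s + 1) := (Real.Gamma_eq_integral (by linarith)).symm

lemma summable_mlTerm {α : ℝ} (hα : 0 < α) (z : ℝ) : Summable (mlTerm α z) := by
  -- If `A ^ α = |z| + 1`, then `A ^ (α n) exp (-A) ≤ Γ (α n + 1)` gives a geometric majorant.
  set A : ℝ := (|z| + 1) ^ α⁻¹
  have hAα : A ^ α = |z| + 1 := Real.rpow_inv_rpow (by positivity) hα.ne'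
  have hratio : |z| / (|z| + 1) < 1 := (div_lt_one (by positivity)).2 (lt_add_one _)
  refine Summable.of_norm_bounded
    ((summable_geometric_of_lt_one (by positivity) hratio).mul_left (Real.exp A)) fun n => ?_
  have hΓ : (|z| + 1) ^ n * Real.exp (-A) ≤ Real.Gamma (α * n + 1) := by
    rw [← hAα, ← Real.rpow_mul_natCast (by positivity)]
    exact rpow_mul_exp_neg_le_Gamma_add_one (by positivity) (by positivity)
  calc ‖mlTerm α z n‖
      = |z| ^ n / Real.Gamma (α * n + 1) := by
        rw [mlTerm, norm_div, norm_pow, Real.norm_eq_abs, Real.norm_of_nonneg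
          (Real.Gamma_nonneg_of_nonneg (by positivity))]
    _ ≤ |z| ^ n / ((|z| + 1) ^ n * Real.exp (-A)) := by gcongr
    _ = Real.exp A * (|z| / (|z| + 1)) ^ n := by
        rw [Real.exp_neg, div_pow]
        field_simp

end MittagLeffler

lemma integral_rpow_mul_sub_rpow {p q c : ℝ} (hp : 0 < p) (hq : 0 < q) (hc : 0 < c) :
    ∫ s in (0 : ℝ)..c, s ^ (p - 1) * (c - s) ^ (q - 1) =
      c ^ (p + q - 1) * ProbabilityTheory.beta p q := by
  have hbeta : Complex.betaIntegral p q = (ProbabilityTheory.beta p q : ℝ) := by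
    rw [Complex.betaIntegral_eq_Gamma_mul_div _ _ (by simpa) (by simpa), ProbabilityTheory.beta,
      ← Complex.ofReal_add]
    simp only [Complex.Gamma_ofReal, Complex.ofReal_mul, Complex.ofReal_div]
  have hscaled := Complex.betaIntegral_scaled p q hc
  have hintegrand : ∀ s ∈ uIcc 0 c,
      (s : ℂ) ^ ((p : ℂ) - 1) * ((c : ℂ) - s) ^ ((q : ℂ) - 1) =
        ((s ^ (p - 1) * (c - s) ^ (q - 1) : ℝ) : ℂ) := by
    intro s hs
    rw [uIcc_of_le hc.le] at hs
    push_cast [Complex.ofReal_cpow hs.1, Complex.ofReal_cpow (sub_nonneg.2 hs.2)]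
    rfl
  rw [intervalIntegral.integral_congr hintegrand, intervalIntegral.integral_ofReal, hbeta,
    ← Complex.ofReal_add, ← Complex.ofReal_one, ← Complex.ofReal_sub,
    ← Complex.ofReal_cpow hc.le] at hscaled
  exact_mod_cast hscaled

/-- The functions `ψ` with respect to which fractional integrals over subintervals `[a, t]` of
`[a, b]` are taken. No more is required of `ψ` than the substitution `s = ψ σ` needs; in particular
`ψ` may be constant on subintervals. -/
structure IsTimeChange (ψ : ℝ → ℝ) (a b : ℝ) : Prop where
  continuousOn : ContinuousOn ψ (Icc a b)
  differentiableOn : DifferentiableOn ℝ ψ (Ioo a b)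
  monotoneOn : MonotoneOn ψ (Icc a b)

/-- The left-sided `ψ`-Riemann–Liouville fractional integral of `u` of order `α`, based at `a`. -/
noncomputable def fracIntegral (α : ℝ) (ψ : ℝ → ℝ) (a : ℝ) (u : ℝ → ℝ) (t : ℝ) : ℝ :=
  (Real.Gamma α)⁻¹ * ∫ σ in a..t, deriv ψ σ * (ψ t - ψ σ) ^ (α - 1) * u σ

namespace IsTimeChange

variable {a b t α : ℝ} {ψ : ℝ → ℝ}

lemma mono_right (hψ : IsTimeChange ψ a b) (htb : t ≤ b) : IsTimeChange ψ a t where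
  continuousOn := hψ.continuousOn.mono (Icc_subset_Icc_right htb)
  differentiableOn := hψ.differentiableOn.mono (Ioo_subset_Ioo_right htb)
  monotoneOn := hψ.monotoneOn.mono (Icc_subset_Icc_right htb)

lemma hasDerivAt (hψ : IsTimeChange ψ a b) {σ : ℝ} (hσ : σ ∈ Ioo a b) :
    HasDerivAt ψ (deriv ψ σ) σ :=
  (hψ.differentiableOn.differentiableAt (isOpen_Ioo.mem_nhds hσ)).hasDerivAt

lemma deriv_nonneg (hψ : IsTimeChange ψ a b) {σ : ℝ} (hσ : σ ∈ Ioo a b) : 0 ≤ deriv ψ σ := by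
  rw [← derivWithin_of_mem_nhds (Icc_mem_nhds hσ.1 hσ.2)]
  exact hψ.monotoneOn.derivWithin_nonneg

lemma le_apply (hψ : IsTimeChange ψ a b) (ht : t ∈ Icc a b) : ψ a ≤ ψ t :=
  hψ.monotoneOn (left_mem_Icc.2 (ht.1.trans ht.2)) ht ht.1

lemma integral_deriv_mul_comp (hψ : IsTimeChange ψ a t) (hat : a ≤ t) (g : ℝ → ℝ) :
    ∫ σ in a..t, deriv ψ σ * g (ψ σ) = ∫ s in ψ a..ψ t, g s := by
  refine intervalIntegral.integral_deriv_smul_comp_of_deriv_nonneg (f' := deriv ψ) (g := g) ?_ ?_ ?_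
  · rw [uIcc_of_le hat]
    exact hψ.continuousOn
  all_goals rw [min_eq_left hat, max_eq_right hat]
  exacts [fun _ => hψ.hasDerivAt, fun _ => hψ.deriv_nonneg]

lemma intervalIntegrable_deriv_mul_comp_iff (hψ : IsTimeChange ψ a t) (hat : a ≤ t) (g : ℝ → ℝ) :
    IntervalIntegrable (fun σ => deriv ψ σ * g (ψ σ)) volume a t ↔
      IntervalIntegrable g volume (ψ a) (ψ t) := by
  refine intervalIntegral.integrable_deriv_smul_comp_iff_of_deriv_nonneg
    (f' := deriv ψ) (g := g) ?_ ?_ ?_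
  · rw [uIcc_of_le hat]
    exact hψ.continuousOn
  all_goals rw [min_eq_left hat, max_eq_right hat]
  exacts [fun _ => hψ.hasDerivAt, fun _ => hψ.deriv_nonneg]

lemma intervalIntegrable_kernel (hψ : IsTimeChange ψ a t) (hα : 0 < α) (hat : a ≤ t) :
    IntervalIntegrable (fun σ => deriv ψ σ * (ψ t - ψ σ) ^ (α - 1)) volume a t := by
  have hrpow : IntervalIntegrable (fun s : ℝ => s ^ (α - 1)) volume (ψ t - ψ a) (ψ t - ψ t) :=
    intervalIntegral.intervalIntegrable_rpow' (by linarith)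
  rw [hψ.intervalIntegrable_deriv_mul_comp_iff hat fun s => (ψ t - s) ^ (α - 1)]
  simpa using hrpow.comp_sub_left (ψ t)

lemma intervalIntegrable_kernel_mul (hψ : IsTimeChange ψ a t) (hα : 0 < α) (hat : a ≤ t)
    {u : ℝ → ℝ} (hu : ContinuousOn u (Icc a t)) :
    IntervalIntegrable (fun σ => deriv ψ σ * (ψ t - ψ σ) ^ (α - 1) * u σ) volume a t :=
  (hψ.intervalIntegrable_kernel hα hat).mul_continuousOn (by rwa [uIcc_of_le hat])

lemma kernel_nonneg (hψ : IsTimeChange ψ a t) {σ : ℝ} (hσ : σ ∈ Ioo a t) :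
    0 ≤ deriv ψ σ * (ψ t - ψ σ) ^ (α - 1) := by
  have hle : ψ σ ≤ ψ t :=
    hψ.monotoneOn (Ioo_subset_Icc_self hσ) (right_mem_Icc.2 (hσ.1.trans hσ.2).le) hσ.2.le
  exact mul_nonneg (hψ.deriv_nonneg hσ) (Real.rpow_nonneg (sub_nonneg.2 hle) _)

end IsTimeChange

section FracIntegral

variable {a t α : ℝ} {ψ u v : ℝ → ℝ}

lemma fracIntegral_const_mul (c : ℝ) :
    fracIntegral α ψ a (fun σ => c * u σ) t = c * fracIntegral α ψ a u t := by
  simp only [fracIntegral, mul_left_comm _ c, intervalIntegral.integral_const_mul]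

lemma fracIntegral_add (hα : 0 < α) (hψ : IsTimeChange ψ a t) (hat : a ≤ t)
    (hu : ContinuousOn u (Icc a t)) (hv : ContinuousOn v (Icc a t)) :
    fracIntegral α ψ a (fun σ => u σ + v σ) t =
      fracIntegral α ψ a u t + fracIntegral α ψ a v t := by
  simp only [fracIntegral, mul_add]
  rw [intervalIntegral.integral_add (hψ.intervalIntegrable_kernel_mul hα hat hu)
    (hψ.intervalIntegrable_kernel_mul hα hat hv), mul_add]

lemma fracIntegral_sub (hα : 0 < α) (hψ : IsTimeChange ψ a t) (hat : a ≤ t)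
    (hu : ContinuousOn u (Icc a t)) (hv : ContinuousOn v (Icc a t)) :
    fracIntegral α ψ a (fun σ => u σ - v σ) t =
      fracIntegral α ψ a u t - fracIntegral α ψ a v t := by
  simp only [fracIntegral, mul_sub]
  rw [intervalIntegral.integral_sub (hψ.intervalIntegrable_kernel_mul hα hat hu)
    (hψ.intervalIntegrable_kernel_mul hα hat hv), mul_sub]

lemma fracIntegral_sum {ι : Type*} (s : Finset ι) {w : ι → ℝ → ℝ} (hα : 0 < α)
    (hψ : IsTimeChange ψ a t) (hat : a ≤ t) (hw : ∀ i ∈ s, ContinuousOn (w i) (Icc a t)) :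
    fracIntegral α ψ a (fun σ => ∑ i ∈ s, w i σ) t = ∑ i ∈ s, fracIntegral α ψ a (w i) t := by
  simp only [fracIntegral, Finset.mul_sum]
  rw [intervalIntegral.integral_finsetSum fun i hi =>
    hψ.intervalIntegrable_kernel_mul hα hat (hw i hi), Finset.mul_sum]

lemma fracIntegral_mono (hα : 0 < α) (hψ : IsTimeChange ψ a t) (hat : a ≤ t)
    (hu : ContinuousOn u (Icc a t)) (hv : ContinuousOn v (Icc a t))
    (huv : ∀ σ ∈ Ioo a t, u σ ≤ v σ) : fracIntegral α ψ a u t ≤ fracIntegral α ψ a v t := by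
  refine mul_le_mul_of_nonneg_left ?_ (inv_nonneg.2 (Real.Gamma_nonneg_of_nonneg hα.le))
  exact intervalIntegral.integral_mono_on_of_le_Ioo hat
    (hψ.intervalIntegrable_kernel_mul hα hat hu) (hψ.intervalIntegrable_kernel_mul hα hat hv)
    fun σ hσ => mul_le_mul_of_nonneg_left (huv σ hσ) (hψ.kernel_nonneg hσ)

lemma fracIntegral_nonneg (hα : 0 < α) (hψ : IsTimeChange ψ a t) (hat : a ≤ t)
    (hu : ContinuousOn u (Icc a t)) (hu0 : ∀ σ ∈ Ioo a t, 0 ≤ u σ) :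
    0 ≤ fracIntegral α ψ a u t := by
  simpa [fracIntegral] using fracIntegral_mono hα hψ hat continuousOn_const hu hu0

lemma abs_fracIntegral_le (hα : 0 < α) (hψ : IsTimeChange ψ a t) (hat : a ≤ t)
    (hu : ContinuousOn u (Icc a t)) (hv : ContinuousOn v (Icc a t))
    (huv : ∀ σ ∈ Ioo a t, |u σ| ≤ v σ) : |fracIntegral α ψ a u t| ≤ fracIntegral α ψ a v t := by
  have hneg : fracIntegral α ψ a (fun σ => -1 * v σ) t ≤ fracIntegral α ψ a u t :=
    fracIntegral_mono hα hψ hat (continuousOn_const.mul hv) hu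
      fun σ hσ => by linarith [(abs_le.1 (huv σ hσ)).1]
  rw [fracIntegral_const_mul, neg_one_mul] at hneg
  exact abs_le.2
    ⟨hneg, fracIntegral_mono hα hψ hat hu hv fun σ hσ => (abs_le.1 (huv σ hσ)).2⟩

lemma fracIntegral_rpow_sub {β : ℝ} (hα : 0 < α) (hβ : -1 < β) (hαβ : α + β ≠ 0)
    (hψ : IsTimeChange ψ a t) (hat : a ≤ t) :
    fracIntegral α ψ a (fun σ => (ψ σ - ψ a) ^ β) t =
      Real.Gamma (β + 1) / Real.Gamma (α + β + 1) * (ψ t - ψ a) ^ (α + β) := by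
  have hsubst : ∫ σ in a..t, deriv ψ σ * (ψ t - ψ σ) ^ (α - 1) * (ψ σ - ψ a) ^ β =
      ∫ s in (0 : ℝ)..ψ t - ψ a, s ^ (β + 1 - 1) * (ψ t - ψ a - s) ^ (α - 1) := by
    have hshift := intervalIntegral.integral_comp_sub_right (a := ψ a) (b := ψ t)
      (fun s => s ^ (β + 1 - 1) * (ψ t - ψ a - s) ^ (α - 1)) (ψ a)
    rw [sub_self] at hshift
    rw [← hshift, ← hψ.integral_deriv_mul_comp hat]
    refine intervalIntegral.integral_congr fun σ _ => ?_
    simp only [add_sub_cancel_right, sub_sub_sub_cancel_right]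
    ring
  rw [fracIntegral, hsubst]
  rcases (hψ.le_apply (right_mem_Icc.2 hat)).eq_or_lt with heq | hlt
  · simp [heq, Real.zero_rpow hαβ]
  · have hΓ : Real.Gamma α ≠ 0 := (Real.Gamma_pos_of_pos hα).ne'
    rw [integral_rpow_mul_sub_rpow (by linarith) hα (sub_pos.2 hlt), ProbabilityTheory.beta,
      show β + 1 + α - 1 = α + β by ring, show β + 1 + α = α + β + 1 by ring]
    field_simp

end FracIntegral

section Gronwall

variable {a b t α R c M : ℝ} {ψ u : ℝ → ℝ}

lemma mul_fracIntegral_mlTerm (hα : 0 < α) (hψ : IsTimeChange ψ a t) (hat : a ≤ t) (n : ℕ) :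
    R * fracIntegral α ψ a (fun σ => mlTerm α (R * (ψ σ - ψ a) ^ α) n) t =
      mlTerm α (R * (ψ t - ψ a) ^ α) (n + 1) := by
  have hterm : ∀ σ ∈ Icc a t, ∀ m : ℕ, mlTerm α (R * (ψ σ - ψ a) ^ α) m =
      R ^ m / Real.Gamma (α * m + 1) * (ψ σ - ψ a) ^ (α * m) := by
    intro σ hσ m
    rw [mlTerm, mul_pow, ← Real.rpow_mul_natCast (sub_nonneg.2 (hψ.le_apply hσ))]
    ring
  have hcongr : fracIntegral α ψ a (fun σ => mlTerm α (R * (ψ σ - ψ a) ^ α) n) t =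
      fracIntegral α ψ a
        (fun σ => R ^ n / Real.Gamma (α * n + 1) * (ψ σ - ψ a) ^ (α * n)) t := by
    refine congrArg _ (intervalIntegral.integral_congr fun σ hσ => ?_)
    rw [uIcc_of_le hat] at hσ
    simp only [hterm σ hσ n]
  have hn : 0 ≤ α * n := by positivity
  have hΓ : Real.Gamma (α * n + 1) ≠ 0 := (Real.Gamma_pos_of_pos (by positivity)).ne'
  rw [hcongr, fracIntegral_const_mul,
    fracIntegral_rpow_sub hα (by linarith) (by positivity) hψ hat,
    hterm t (right_mem_Icc.2 hat) (n + 1),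
    show α + α * n = α * (n + 1 : ℕ) by push_cast; ring, pow_succ']
  field_simp

/-- The `n`-th iterate of `v ↦ c + R I^α v` started at the constant `M`, in closed form: a partial
sum of the Mittag-Leffler series plus a remainder. -/
noncomputable def gronwallIterate (α : ℝ) (ψ : ℝ → ℝ) (a R c M : ℝ) (n : ℕ) (t : ℝ) : ℝ :=
  c * ∑ j ∈ Finset.range n, mlTerm α (R * (ψ t - ψ a) ^ α) j +
    M * mlTerm α (R * (ψ t - ψ a) ^ α) n

lemma gronwallIterate_zero : gronwallIterate α ψ a R c M 0 t = M := by
  simp [gronwallIterate, mlTerm_zero]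

lemma continuousOn_mlTerm (hα : 0 < α) (hψ : IsTimeChange ψ a b) (n : ℕ) :
    ContinuousOn (fun σ => mlTerm α (R * (ψ σ - ψ a) ^ α) n) (Icc a b) :=
  ((continuousOn_const.mul ((hψ.continuousOn.sub continuousOn_const).rpow_const
    fun _ _ => Or.inr hα.le)).pow n).div_const _

lemma continuousOn_sum_mlTerm (hα : 0 < α) (hψ : IsTimeChange ψ a b) (n : ℕ) :
    ContinuousOn (fun σ => ∑ j ∈ Finset.range n, mlTerm α (R * (ψ σ - ψ a) ^ α) j) (Icc a b) :=
  continuousOn_finsetSum _ fun j _ => continuousOn_mlTerm hα hψ j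

lemma continuousOn_gronwallIterate (hα : 0 < α) (hψ : IsTimeChange ψ a b) (n : ℕ) :
    ContinuousOn (gronwallIterate α ψ a R c M n) (Icc a b) :=
  (continuousOn_const.mul (continuousOn_sum_mlTerm hα hψ n)).add
    (continuousOn_const.mul (continuousOn_mlTerm hα hψ n))

lemma gronwallIterate_succ (hα : 0 < α) (hψ : IsTimeChange ψ a t) (hat : a ≤ t) (n : ℕ) :
    gronwallIterate α ψ a R c M (n + 1) t =
      c + R * fracIntegral α ψ a (gronwallIterate α ψ a R c M n) t := by
  have hI : fracIntegral α ψ a (gronwallIterate α ψ a R c M n) t =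
      c * ∑ j ∈ Finset.range n, fracIntegral α ψ a
          (fun σ => mlTerm α (R * (ψ σ - ψ a) ^ α) j) t +
        M * fracIntegral α ψ a (fun σ => mlTerm α (R * (ψ σ - ψ a) ^ α) n) t := by
    rw [← fracIntegral_sum _ hα hψ hat fun j _ => continuousOn_mlTerm hα hψ j,
      ← fracIntegral_const_mul, ← fracIntegral_const_mul]
    exact fracIntegral_add hα hψ hat (continuousOn_const.mul (continuousOn_sum_mlTerm hα hψ n))
      (continuousOn_const.mul (continuousOn_mlTerm hα hψ n))
  rw [hI, mul_add, mul_left_comm R, mul_left_comm R, Finset.mul_sum (a := R)]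
  simp only [mul_fracIntegral_mlTerm hα hψ hat, gronwallIterate, Finset.sum_range_succ' _ n,
    mlTerm_zero]
  ring

lemma tendsto_gronwallIterate (hα : 0 < α) :
    Tendsto (fun n => gronwallIterate α ψ a R c M n t) atTop
      (𝓝 (c * ML α (R * (ψ t - ψ a) ^ α))) := by
  have hsum := summable_mlTerm hα (R * (ψ t - ψ a) ^ α)
  have hlim := (hsum.hasSum.tendsto_sum_nat.const_mul c).add
    (hsum.tendsto_atTop_zero.const_mul M)
  rw [mul_zero, add_zero] at hlim
  exact hlim

lemma le_gronwallIterate (hα : 0 < α) (hψ : IsTimeChange ψ a b) (hR : 0 ≤ R)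
    (hu : ContinuousOn u (Icc a b)) (huM : ∀ t ∈ Icc a b, u t ≤ M)
    (h : ∀ t ∈ Icc a b, u t ≤ c + R * fracIntegral α ψ a u t) (n : ℕ) :
    ∀ t ∈ Icc a b, u t ≤ gronwallIterate α ψ a R c M n t := by
  induction n with
  | zero => simpa only [gronwallIterate_zero] using huM
  | succ n ih =>
    intro t ht
    have hsub : Icc a t ⊆ Icc a b := Icc_subset_Icc_right ht.2
    have hψt := hψ.mono_right ht.2
    have hI : fracIntegral α ψ a u t ≤ fracIntegral α ψ a (gronwallIterate α ψ a R c M n) t :=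
      fracIntegral_mono hα hψt ht.1 (hu.mono hsub) (continuousOn_gronwallIterate hα hψt n)
        fun σ hσ => ih σ (hsub (Ioo_subset_Icc_self hσ))
    calc u t ≤ c + R * fracIntegral α ψ a u t := h t ht
      _ ≤ c + R * fracIntegral α ψ a (gronwallIterate α ψ a R c M n) t := by gcongr
      _ = gronwallIterate α ψ a R c M (n + 1) t := (gronwallIterate_succ hα hψt ht.1 n).symm

theorem le_const_mul_ML_of_le_const_add_fracIntegral (hα : 0 < α)
    (hψ : IsTimeChange ψ a b) (hR : 0 ≤ R) (hu : ContinuousOn u (Icc a b))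
    (h : ∀ t ∈ Icc a b, u t ≤ c + R * fracIntegral α ψ a u t) :
    ∀ t ∈ Icc a b, u t ≤ c * ML α (R * (ψ t - ψ a) ^ α) := by
  obtain ⟨M, hM⟩ := isCompact_Icc.bddAbove_image hu
  exact fun t ht => ge_of_tendsto' (tendsto_gronwallIterate hα) fun n =>
    le_gronwallIterate hα hψ hR hu (fun s hs => hM (mem_image_of_mem u hs)) h n t ht

theorem le_mul_ML_of_le_add_fracIntegral {c ρ : ℝ → ℝ} (hα : 0 < α) (hψ : IsTimeChange ψ a b)
    (hc : MonotoneOn c (Icc a b)) (hρ : MonotoneOn ρ (Icc a b)) (hρ0 : ∀ t ∈ Icc a b, 0 ≤ ρ t)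
    (hu : ContinuousOn u (Icc a b)) (hu0 : ∀ t ∈ Icc a b, 0 ≤ u t)
    (h : ∀ t ∈ Icc a b, u t ≤ c t + ρ t * fracIntegral α ψ a u t) :
    ∀ t ∈ Icc a b, u t ≤ c t * ML α (ρ t * (ψ t - ψ a) ^ α) := by
  intro T hT
  have hsub : Icc a T ⊆ Icc a b := Icc_subset_Icc_right hT.2
  refine le_const_mul_ML_of_le_const_add_fracIntegral hα (hψ.mono_right hT.2) (hρ0 T hT)
    (hu.mono hsub) (fun t ht => (h t (hsub ht)).trans ?_) T (right_mem_Icc.2 hT.1)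
  have hsubt : Icc a t ⊆ Icc a b := Icc_subset_Icc_right (hsub ht).2
  have hI : 0 ≤ fracIntegral α ψ a u t :=
    fracIntegral_nonneg hα (hψ.mono_right (hsub ht).2) ht.1 (hu.mono hsubt)
      fun σ hσ => hu0 σ (hsubt (Ioo_subset_Icc_self hσ))
  gcongr
  exacts [hc (hsub ht) hT ht.2, hρ (hsub ht) hT ht.2]

end Gronwall

lemma volterraK_eq_fracIntegral (α : ℝ) (ψ : ℝ → ℝ) (a : ℝ) (k : ℝ → ℝ → ℝ → ℝ) (x : ℝ → ℝ)
    (t : ℝ) : volterraK α ψ a k x t = fracIntegral α ψ a (fun σ => k t σ (x σ)) t :=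
  rfl

lemma abs_volterraK_sub_le {a t α L : ℝ} {ψ x y : ℝ → ℝ} {k : ℝ → ℝ → ℝ → ℝ} (hα : 0 < α)
    (hψ : IsTimeChange ψ a t) (hat : a ≤ t)
    (hk : ContinuousOn (Function.uncurry (k t)) (Icc a t ×ˢ univ))
    (hkLip : ∀ σ ∈ Icc a t, ∀ u v, |k t σ u - k t σ v| ≤ L * |u - v|)
    (hx : ContinuousOn x (Icc a t)) (hy : ContinuousOn y (Icc a t)) :
    |volterraK α ψ a k x t - volterraK α ψ a k y t| ≤
      L * fracIntegral α ψ a (fun σ => |x σ - y σ|) t := by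
  have hkz : ∀ {z : ℝ → ℝ}, ContinuousOn z (Icc a t) →
      ContinuousOn (fun σ => k t σ (z σ)) (Icc a t) := fun hz =>
    hk.comp (continuousOn_id.prodMk hz) fun σ hσ => ⟨hσ, mem_univ _⟩
  rw [volterraK_eq_fracIntegral, volterraK_eq_fracIntegral,
    ← fracIntegral_sub hα hψ hat (hkz hx) (hkz hy), ← fracIntegral_const_mul]
  exact abs_fracIntegral_le hα hψ hat ((hkz hx).sub (hkz hy))
    (continuousOn_const.mul (hx.sub hy).abs)
    fun σ hσ => hkLip σ (Ioo_subset_Icc_self hσ) _ _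

lemma abs_sub_le_of_lipschitz_of_approx_fixedPoint {g : ℝ → ℝ → ℝ} {N ε u v u' v' : ℝ}
    (hN1 : N < 1) (hg : |g u v - g u' v'| ≤ N * (|u - u'| + |v - v'|)) (hu : u = g u v)
    (hu' : |g u' v' - u'| ≤ ε) : |u - u'| ≤ ε / (1 - N) + N / (1 - N) * |v - v'| := by
  have htri : |u - u'| ≤ |g u v - g u' v'| + |g u' v' - u'| := by
    simpa only [← hu] using abs_sub_le (g u v) (g u' v') u'
  calc |u - u'| ≤ (ε + N * |v - v'|) / (1 - N) :=
        (le_div_iff₀ (sub_pos.2 hN1)).2 (by linarith)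
    _ = ε / (1 - N) + N / (1 - N) * |v - v'| := by ring

theorem volterra_continuous_dependence_general {a b α N ε : ℝ} {ψ x y L : ℝ → ℝ}
    {f k : ℝ → ℝ → ℝ → ℝ} (hα : 0 < α) (hψ : IsTimeChange ψ a b) (hN1 : N < 1)
    (hk : ∀ t ∈ Icc a b, ContinuousOn (Function.uncurry (k t)) (Icc a t ×ˢ univ))
    (hL : MonotoneOn L (Icc a b))
    (hfLip : ∀ t ∈ Icc a b, ∀ u v u' v', |f t u v - f t u' v'| ≤ N * (|u - u'| + |v - v'|))
    (hkLip : ∀ t ∈ Icc a b, ∀ σ ∈ Icc a t, ∀ u v, |k t σ u - k t σ v| ≤ L t * |u - v|)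
    (hx : ContinuousOn x (Icc a b)) (hy : ContinuousOn y (Icc a b))
    (hxsol : ∀ t ∈ Icc a b, x t = f t (x t) (volterraK α ψ a k x t))
    (hysol : ∀ t ∈ Icc a b, |f t (y t) (volterraK α ψ a k y t) - y t| ≤ ε) :
    ∀ t ∈ Icc a b,
      |x t - y t| ≤ ε / (1 - N) * ML α (N / (1 - N) * L t * (ψ t - ψ a) ^ α) := by
  intro T hT
  have hN0 : 0 ≤ N := by simpa using (abs_nonneg _).trans (hfLip T hT 1 0 0 0)
  have hN : 0 ≤ N / (1 - N) := div_nonneg hN0 (sub_pos.2 hN1).le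
  have hL0 : ∀ t ∈ Icc a b, 0 ≤ L t := fun t ht => by
    simpa using (abs_nonneg _).trans (hkLip t ht t (right_mem_Icc.2 ht.1) 1 0)
  refine le_mul_ML_of_le_add_fracIntegral hα hψ monotoneOn_const
    (fun s hs t ht hst => mul_le_mul_of_nonneg_left (hL hs ht hst) hN)
    (fun t ht => mul_nonneg hN (hL0 t ht)) (hx.sub hy).abs (fun t _ => abs_nonneg _)
    (fun t ht => ?_) T hT
  have hsub : Icc a t ⊆ Icc a b := Icc_subset_Icc_right ht.2
  calc |x t - y t|
      ≤ ε / (1 - N) + N / (1 - N) * |volterraK α ψ a k x t - volterraK α ψ a k y t| :=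
        abs_sub_le_of_lipschitz_of_approx_fixedPoint hN1 (hfLip t ht _ _ _ _) (hxsol t ht)
          (hysol t ht)
    _ ≤ ε / (1 - N) + N / (1 - N) * (L t * fracIntegral α ψ a (fun σ => |x σ - y σ|) t) := by
        gcongr
        exact abs_volterraK_sub_le hα (hψ.mono_right ht.2) ht.1 (hk t ht) (hkLip t ht)
          (hx.mono hsub) (hy.mono hsub)
    _ = ε / (1 - N) + N / (1 - N) * L t * fracIntegral α ψ a (fun σ => |x σ - y σ|) t := by
        rw [mul_assoc]

theorem volterra_continuous_dependence
    (a b α N ε₁ : ℝ) (ψ : ℝ → ℝ)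
    (f fbar : ℝ → ℝ → ℝ → ℝ) (k kbar : ℝ → ℝ → ℝ → ℝ)
    (r : ℝ → ℝ → ℝ) (x y : ℝ → ℝ)
    (hα0 : 0 < α) (hα1 : α ≤ 1) (hab : a ≤ b)
    (hmono : StrictMonoOn ψ (Icc a b)) (hC1ψ : ContDiffOn ℝ 1 ψ (Icc a b))
    (hN0 : 0 ≤ N) (hN1 : N < 1) (hε : 0 < ε₁)
    (hf : Continuous fun p : ℝ × ℝ × ℝ => f p.1 p.2.1 p.2.2)
    (hfbar : Continuous fun p : ℝ × ℝ × ℝ => fbar p.1 p.2.1 p.2.2)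
    (hk : Continuous fun p : ℝ × ℝ × ℝ => k p.1 p.2.1 p.2.2)
    (hkbar : Continuous fun p : ℝ × ℝ × ℝ => kbar p.1 p.2.1 p.2.2)
    (hr : ContinuousOn (fun q : ℝ × ℝ => r q.1 q.2)
      {q : ℝ × ℝ | a ≤ q.2 ∧ q.2 ≤ q.1 ∧ q.1 ≤ b})
    (hr0 : ∀ t σ, a ≤ σ → σ ≤ t → t ≤ b → 0 ≤ r t σ)
    (hrdiagmono : MonotoneOn (fun t => r t t) (Icc a b))
    (hrdiag : ∀ t σ, a ≤ σ → σ ≤ t → t ≤ b → r t σ ≤ r t t)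
    (hfLip : ∀ t u v u' v', |f t u v - f t u' v'| ≤ N * (|u - u'| + |v - v'|))
    (hkLip : ∀ t σ u v, |k t σ u - k t σ v| ≤ r t σ * |u - v|)
    (hclose : ∀ t ∈ Icc a b,
      |f t (y t) (volterraK α ψ a k y t) - fbar t (y t) (volterraK α ψ a kbar y t)| ≤ ε₁)
    (hx : ContinuousOn x (Icc a b)) (hy : ContinuousOn y (Icc a b))
    (hxsol : ∀ t ∈ Icc a b, x t = f t (x t) (volterraK α ψ a k x t))
    (hysol : ∀ t ∈ Icc a b, y t = fbar t (y t) (volterraK α ψ a kbar y t)) :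
    ∀ t ∈ Icc a b,
      |x t - y t| ≤ ε₁ / (1 - N) * ML α (N / (1 - N) * r t t * (ψ t - ψ a) ^ α) :=
  volterra_continuous_dependence_general hα0
    ⟨hC1ψ.continuousOn, (hC1ψ.differentiableOn one_ne_zero).mono Ioo_subset_Icc_self,
      hmono.monotoneOn⟩ hN1
    (fun t _ => (hk.comp (Continuous.prodMk_right t)).continuousOn) hrdiagmono
    (fun t _ => hfLip t)
    (fun t ht σ hσ u v => (hkLip t σ u v).trans
      (mul_le_mul_of_nonneg_right (hrdiag t σ hσ.1 hσ.2 ht.2) (abs_nonneg _)))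
    hx hy hxsol (fun t ht => by simpa only [← hysol t ht] using hclose t ht)
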